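/- Let (W,T) be a dual Coxeter system of finite rank and let c be a parabolic Coxeter element with ℓ_T(c) = n. Then the subgroup generated by the factors of a reduced reflection factorization of c does not depend on the factorization: for any two tuples (t1,…,tn), (t1',…,tn') ∈ T^n with c = t1⋯tn = t1'⋯tn', one has ⟨t1,…,tn⟩ = ⟨t1',…,tn'⟩. -/

import Mathlib

/-- The reflection length `ℓ_T` of `w`: the minimal length of a factorization of `w`
into reflections. -/
noncomputable def reflLength {B : Type*} {W : Type*} [Group W] {M : CoxeterMatrix B}
    (cs : CoxeterSystem M W) (w : W) : ℕ :=
  sInf {n | ∃ l : List W, (∀ t ∈ l, cs.IsReflection t) ∧ l.prod = w ∧ l.length = n}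

namespace CoxeterSystem

open List

section Inversions

variable {B : Type*} {W : Type*} [Group W] {M : CoxeterMatrix B} (cs : CoxeterSystem M W)

open Classical in
/-- The action of an involution `a` on signed elements `(t, ε)` of `W`: it conjugates `t` by `a`
and flips the sign exactly when `t = a`. -/
noncomputable def signedConj {W : Type*} [Group W] (a : W) : Function.End (W × ZMod 2) :=
  fun p ↦ (a * p.1 * a⁻¹, p.2 + if p.1 = a then 1 else 0)

open Classical in
theorem signedConj_mul_pow_apply {a b : W} (ha : a * a = 1) (hb : b * b = 1) (k : ℕ)
    (p : W × ZMod 2) :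
    ((signedConj a * signedConj b) ^ k) p =
      ((a * b) ^ k * p.1 * ((a * b) ^ k)⁻¹,
        p.2 + ∑ j ∈ Finset.range (2 * k), if p.1 = b * (a * b) ^ j then 1 else 0) := by
  have ha' : a⁻¹ = a := inv_eq_of_mul_eq_one_left ha
  have hb' : b⁻¹ = b := inv_eq_of_mul_eq_one_left hb
  have hpow (j : ℕ) : ((a * b) ^ j)⁻¹ * b = b * (a * b) ^ j := by
    induction j with
    | zero => simp
    | succ j ih =>
      calc ((a * b) ^ (j + 1))⁻¹ * b = ((a * b) ^ j)⁻¹ * b * (a * b) := by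
            rw [pow_succ', mul_inv_rev, mul_inv_rev, ha', hb']; simp only [mul_assoc]
        _ = b * (a * b) ^ (j + 1) := by rw [ih, pow_succ, mul_assoc]
  induction k with
  | zero => simp; rfl
  | succ k ih =>
    rw [pow_succ']
    change signedConj a (signedConj b (((signedConj a * signedConj b) ^ k) p)) = _
    rw [ih]
    set q := (a * b) ^ k with hq
    have h₁ : q * p.1 * q⁻¹ = b ↔ p.1 = b * (a * b) ^ (2 * k) := by
      rw [two_mul, pow_add, ← mul_assoc, ← hpow, ← hq]
      constructor
      · intro h; rw [← h]; group
      · intro h; rw [h]; group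
    have h₂ : b * (q * p.1 * q⁻¹) * b⁻¹ = a ↔ p.1 = b * (a * b) ^ (2 * k + 1) := by
      have e : b * (a * b) ^ (2 * k + 1) = q⁻¹ * b⁻¹ * a * b * q := by
        rw [show 2 * k + 1 = k + (1 + k) by ring, pow_add, pow_add, ← mul_assoc, ← hpow, ← hq, hb']
        simp only [pow_one, mul_assoc]
      rw [e]
      constructor
      · intro h; rw [← h]; group
      · intro h; rw [h]; group
    have h₃ : 2 * (k + 1) = 2 * k + 1 + 1 := by ring
    rw [h₃, Finset.sum_range_succ, Finset.sum_range_succ]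
    simp only [signedConj, h₁, h₂]
    refine Prod.ext ?_ ?_
    · simp only [pow_succ', ← hq]
      group
    · simp only [add_assoc]

open Classical in
theorem signedConj_isLiftable : M.IsLiftable fun i ↦ signedConj (cs.simple i) := by
  intro i i'
  funext p
  have hone := cs.simple_mul_simple_pow i i'
  rw [signedConj_mul_pow_apply (cs.simple_mul_simple_self i) (cs.simple_mul_simple_self i'),
    hone, two_mul, Finset.sum_range_add]
  simp only [pow_add, hone, one_mul, inv_one, mul_one, CharTwo.add_self_eq_zero, add_zero]
  rfl

/-- The parity of the number of occurrences of `t` in the right inversion sequence of any word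
for `w`. -/
noncomputable def inversionParity (w t : W) : ZMod 2 :=
  (cs.lift ⟨_, cs.signedConj_isLiftable⟩ w (t, 0)).2

open Classical in
theorem lift_signedConj_wordProd (ω : List B) (p : W × ZMod 2) :
    cs.lift ⟨_, cs.signedConj_isLiftable⟩ (cs.wordProd ω) p =
      (cs.wordProd ω * p.1 * (cs.wordProd ω)⁻¹, p.2 + (cs.rightInvSeq ω).count p.1) := by
  induction ω with
  | nil => simp; rfl
  | cons i ω ih =>
    rw [wordProd_cons, map_mul]
    change cs.lift ⟨_, cs.signedConj_isLiftable⟩ (cs.simple i)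
      (cs.lift ⟨_, cs.signedConj_isLiftable⟩ (cs.wordProd ω) p) = _
    rw [ih, lift_apply_simple]
    have h : cs.wordProd ω * p.1 * (cs.wordProd ω)⁻¹ = cs.simple i ↔
        (cs.wordProd ω)⁻¹ * cs.simple i * cs.wordProd ω = p.1 := by
      constructor
      · intro h; rw [← h]; group
      · intro h; rw [← h]; group
    simp only [signedConj, rightInvSeq, count_cons, h, beq_iff_eq]
    refine Prod.ext ?_ ?_
    · simp [mul_assoc]
    · simp [add_assoc]

open Classical in
theorem inversionParity_wordProd (ω : List B) (t : W) :
    cs.inversionParity (cs.wordProd ω) t = (cs.rightInvSeq ω).count t := by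
  simp [inversionParity, lift_signedConj_wordProd]

theorem inversionParity_mul (x y t : W) :
    cs.inversionParity (x * y) t =
      cs.inversionParity y t + cs.inversionParity x (y * t * y⁻¹) := by
  classical
  obtain ⟨ω, rfl⟩ := cs.wordProd_surjective x
  obtain ⟨ω', rfl⟩ := cs.wordProd_surjective y
  rw [inversionParity, map_mul]
  change (cs.lift ⟨_, cs.signedConj_isLiftable⟩ (cs.wordProd ω)
      (cs.lift ⟨_, cs.signedConj_isLiftable⟩ (cs.wordProd ω') (t, 0))).2 = _
  simp [lift_signedConj_wordProd, inversionParity_wordProd]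

@[simp]
theorem inversionParity_one (t : W) : cs.inversionParity 1 t = 0 := by
  classical
  simpa using cs.inversionParity_wordProd [] t

theorem inversionParity_simple_self (i : B) :
    cs.inversionParity (cs.simple i) (cs.simple i) = 1 := by
  classical
  simpa using cs.inversionParity_wordProd [i] (cs.simple i)

theorem IsReflection.inversionParity_self {t : W} (ht : cs.IsReflection t) :
    cs.inversionParity t t = 1 := by
  obtain ⟨u, i, rfl⟩ := ht
  have h := cs.inversionParity_mul u u⁻¹ (u * cs.simple i * u⁻¹)
  rw [mul_inv_cancel, inversionParity_one] at h
  rw [inversionParity_mul, inversionParity_mul]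
  have e₁ : u⁻¹ * (u * cs.simple i * u⁻¹) * u⁻¹⁻¹ = cs.simple i := by group
  rw [e₁] at h ⊢
  have e₂ : cs.simple i * cs.simple i * (cs.simple i)⁻¹ = cs.simple i := by group
  rw [e₂, inversionParity_simple_self, add_left_comm, ← h, add_zero]

theorem mem_rightInvSeq_of_inversionParity {ω : List B} {t : W}
    (h : cs.inversionParity (cs.wordProd ω) t = 1) : t ∈ cs.rightInvSeq ω := by
  classical
  by_contra hmem
  rw [inversionParity_wordProd, count_eq_zero_of_not_mem hmem] at h
  simp at h

theorem IsReflection.inversionParity_eq_one_iff {t : W} (ht : cs.IsReflection t) (w : W) :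
    cs.inversionParity w t = 1 ↔ cs.length (w * t) < cs.length w := by
  have key (w : W) (h : cs.inversionParity w t = 1) : cs.length (w * t) < cs.length w := by
    obtain ⟨ω, hω, rfl⟩ := cs.exists_isReduced w
    exact (cs.isRightInversion_of_mem_rightInvSeq hω
      (cs.mem_rightInvSeq_of_inversionParity h)).2
  refine ⟨key w, fun h ↦ ?_⟩
  by_contra hne
  have h0 : cs.inversionParity w t = 0 := by
    generalize cs.inversionParity w t = z at *
    revert z; decide
  have h1 : cs.inversionParity (w * t) t = 1 := by
    rw [inversionParity_mul, ht.inversionParity_self, mul_inv_cancel_right, h0, add_zero]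
  have := key _ h1
  rw [mul_assoc, ht.mul_self, mul_one] at this
  omega

theorem exists_eq_getD_rightInvSeq {ω : List B} {t : W} (ht : cs.IsReflection t)
    (h : cs.length (cs.wordProd ω * t) < cs.length (cs.wordProd ω)) :
    ∃ j < ω.length, t = (cs.rightInvSeq ω).getD j 1 := by
  have hmem := cs.mem_rightInvSeq_of_inversionParity ((ht.inversionParity_eq_one_iff cs _).2 h)
  obtain ⟨j, hj, rfl⟩ := List.mem_iff_getElem.mp hmem
  exact ⟨j, by simpa using hj, (List.getD_eq_getElem _ _ hj).symm⟩

theorem IsReflection.exists_length_eq {r : W} (hr : cs.IsReflection r) :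
    ∃ u i, r = u * cs.simple i * u⁻¹ ∧ cs.length r = 2 * cs.length u + 1 := by
  obtain ⟨ω, hω, rfl⟩ := cs.exists_isReduced r
  have hlt : cs.length (cs.wordProd ω * cs.wordProd ω) < cs.length (cs.wordProd ω) := by
    rw [hr.mul_self, length_one]
    exact hr.odd_length.pos
  obtain ⟨j, hj, h⟩ := cs.exists_eq_getD_rightInvSeq hr hlt
  have hone : cs.wordProd (ω.take j) * cs.wordProd (ω.drop (j + 1)) = 1 := by
    rw [← wordProd_append, ← eraseIdx_eq_take_drop_succ, ← wordProd_mul_getD_rightInvSeq, ← h,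
      hr.mul_self]
  have hdrop := eq_inv_of_mul_eq_one_right hone
  have hlen : (ω.take j).length = (ω.drop (j + 1)).length := by
    rw [← (hω.take j).eq, ← (hω.drop (j + 1)).eq, hdrop, length_inv]
  refine ⟨cs.wordProd (ω.take j), ω[j], ?_, ?_⟩
  · rw [← hdrop, mul_assoc, ← wordProd_cons, ← wordProd_append, List.cons_getElem_drop_succ,
      List.take_append_drop]
  · rw [hω.eq, (hω.take j).eq]
    simp only [length_take, length_drop] at hlen ⊢
    omega

theorem length_conj_simple_lt {u t : W} {i : B} (ht : cs.IsReflection t)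
    (h : cs.length (t * u) < cs.length u) :
    cs.length (t * (u * cs.simple i * u⁻¹) * t) < 2 * cs.length u + 1 := by
  have e : t * (u * cs.simple i * u⁻¹) * t = t * u * cs.simple i * (t * u)⁻¹ := by
    rw [mul_inv_rev, ht.inv]
    simp only [mul_assoc]
  have h₁ := cs.length_mul_le (t * u * cs.simple i) (t * u)⁻¹
  have h₂ := cs.length_mul_le (t * u) (cs.simple i)
  rw [length_inv] at h₁
  rw [length_simple] at h₂
  rw [e]
  omega

/-- If `t ≠ r` is an inversion of the reflection `r`, then conjugating `r` by `t` or by `r * t * r`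
shortens it. -/
theorem IsReflection.length_conj_lt_or {r t : W} (hr : cs.IsReflection r)
    (ht : cs.IsReflection t) (hne : t ≠ r) (h : cs.inversionParity r t = 1) :
    cs.length (t * r * t) < cs.length r ∨
      cs.length ((r * t * r) * r * (r * t * r)) < cs.length r := by
  obtain ⟨u, i, hu, hlen⟩ := hr.exists_length_eq
  have hsplit : ∀ a b c : ZMod 2, b ≠ 1 → a + (b + c) = 1 → a = 1 ∨ c = 1 := by decide
  have hpar := h
  rw [hu, inversionParity_mul, inversionParity_mul] at hpar
  have hmid : cs.inversionParity (cs.simple i) (u⁻¹ * t * u⁻¹⁻¹) ≠ 1 := by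
    intro h'
    have hmem := cs.mem_rightInvSeq_of_inversionParity (ω := [i]) (by simpa using h')
    rw [rightInvSeq_singleton, mem_singleton] at hmem
    exact hne (by rw [hu, ← hmem]; group)
  rcases hsplit _ _ _ hmid hpar with h' | h'
  · left
    rw [ht.inversionParity_eq_one_iff, ← length_inv, mul_inv_rev, inv_inv, ht.inv,
      length_inv] at h'
    have := cs.length_conj_simple_lt (i := i) ht h'
    rwa [← hu, ← hlen] at this
  · right
    have hrt : cs.IsReflection (r * t * r) := by simpa [hr.inv] using ht.conj r
    rw [((ht.conj _).conj _).inversionParity_eq_one_iff] at h'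
    have e : u * (cs.simple i * (u⁻¹ * t * u⁻¹⁻¹) * (cs.simple i)⁻¹) = r * t * r * u := by
      rw [hu, inv_simple]
      group
    rw [e] at h'
    have := cs.length_conj_simple_lt (i := i) hrt h'
    rwa [← hu, ← hlen] at this

/-- A set of reflections closed under conjugation by its members and under left multiplication by
`ρ` contains an inversion of `ρ`, unless `ρ = 1`. -/
theorem eq_one_of_inversionParity_eq_zero {R : Set W} {ρ : W} (hne : R.Nonempty)
    (hR : ∀ t ∈ R, cs.IsReflection t) (hconj : ∀ q ∈ R, ∀ r ∈ R, q * r * q ∈ R)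
    (hmul : ∀ r ∈ R, ρ * r ∈ R) (h : ∀ t ∈ R, cs.inversionParity ρ t = 0) : ρ = 1 := by
  obtain ⟨r, hr, hmin⟩ :=
    WellFounded.has_min (InvImage.wf cs.length Nat.lt_wfRel.wf) R hne
  have hlt : ∀ q ∈ R, ¬ cs.length q < cs.length r := hmin
  have hρr := hmul r hr
  have hrρ : r * (ρ * r) * r⁻¹ ∈ R := by
    rw [(hR r hr).inv]
    exact hconj r hr _ hρr
  have hpar := (hR _ hρr).inversionParity_self
  rw [inversionParity_mul, h _ hrρ, add_zero] at hpar
  by_contra hρ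
  rcases (hR r hr).length_conj_lt_or cs (hR _ hρr) (by simpa using hρ) hpar with h' | h'
  · exact hlt _ (hconj _ hρr _ hr) h'
  · exact hlt _ (hconj _ (hconj _ hr _ hρr) _ hr) h'

theorem IsReflection.mul_zpow_mul {t₁ t₂ : W} (h₁ : cs.IsReflection t₁) (h₂ : cs.IsReflection t₂)
    (k : ℤ) : t₁ * (t₁ * t₂) ^ k * t₁ = (t₁ * t₂) ^ (-k) := by
  have h : t₁ * (t₁ * t₂) * t₁⁻¹ = (t₁ * t₂)⁻¹ := by
    rw [mul_inv_rev, h₁.inv, h₂.inv, ← mul_assoc, h₁.mul_self, one_mul]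
  calc t₁ * (t₁ * t₂) ^ k * t₁ = t₁ * (t₁ * t₂) ^ k * t₁⁻¹ := by rw [h₁.inv]
    _ = (t₁ * t₂) ^ (-k) := by rw [← conj_zpow, h, inv_zpow, zpow_neg]

theorem IsReflection.mul_zpow {t₁ t₂ : W} (h₁ : cs.IsReflection t₁) (h₂ : cs.IsReflection t₂)
    (k : ℤ) : cs.IsReflection (t₁ * (t₁ * t₂) ^ k) := by
  have hcomm (j : ℤ) : t₁ * (t₁ * t₂) ^ j = (t₁ * t₂) ^ (-j) * t₁ := by
    rw [← h₁.mul_zpow_mul cs h₂ j, mul_assoc _ t₁ t₁, h₁.mul_self, mul_one]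
  obtain ⟨j, rfl | rfl⟩ := Int.even_or_odd' k
  · have e : t₁ * (t₁ * t₂) ^ (2 * j) = (t₁ * t₂) ^ (-j) * t₁ * ((t₁ * t₂) ^ (-j))⁻¹ := by
      rw [two_mul, zpow_add, ← mul_assoc, hcomm, ← zpow_neg, neg_neg]
    rw [e]
    exact h₁.conj _
  · have e : t₁ * (t₁ * t₂) ^ (2 * j + 1) = (t₁ * t₂) ^ (-j) * t₂ * ((t₁ * t₂) ^ (-j))⁻¹ := by
      rw [show 2 * j + 1 = j + (1 + j) by ring, zpow_add, zpow_add, zpow_one, ← mul_assoc, hcomm,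
        ← zpow_neg, neg_neg, mul_assoc _ t₁, ← mul_assoc t₁ (t₁ * t₂), ← mul_assoc t₁ t₁,
        h₁.mul_self, one_mul, mul_assoc]
    rw [e]
    exact h₂.conj _

/-- In a coset of the dihedral group generated by two reflections, an element having both of
them as inversions is not shortest among its rotations. -/
theorem exists_length_mul_zpow_lt {x t₁ t₂ : W} (h₁ : cs.IsReflection t₁)
    (h₂ : cs.IsReflection t₂) (hne : t₁ ≠ t₂) (hx₁ : cs.length (x * t₁) < cs.length x)
    (hx₂ : cs.length (x * t₂) < cs.length x) :
    ∃ k : ℤ, cs.length (x * (t₁ * t₂) ^ k) < cs.length x := by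
  by_contra! hmin
  have hcomm' (j : ℤ) : (t₁ * t₂) ^ j * t₁ = t₁ * (t₁ * t₂) ^ (-j) := by
    rw [← neg_neg j, ← h₁.mul_zpow_mul cs h₂, mul_assoc _ t₁ t₁, h₁.mul_self, mul_one, neg_neg]
  set ρ := t₁ * t₂ with hρ
  have hzero (z t : W) (ht : cs.IsReflection t) (h : ¬ cs.length (z * t) < cs.length z) :
      cs.inversionParity z t = 0 := by
    rw [← ht.inversionParity_eq_one_iff] at h
    generalize cs.inversionParity z t = a at *
    revert a; decide
  have hρ1 : ρ ≠ 1 := fun h ↦ hne (by rw [eq_inv_of_mul_eq_one_left h, h₂.inv])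
  have hρt (j : ℤ) : ρ * (t₁ * ρ ^ j) = t₁ * ρ ^ (j - 1) := by
    have := hcomm' 1
    rw [zpow_one] at this
    rw [← mul_assoc, this, mul_assoc, ← zpow_add, neg_add_eq_sub]
  refine hρ1 (cs.eq_one_of_inversionParity_eq_zero (R := {t | ∃ k : ℤ, t = t₁ * ρ ^ k})
    ⟨_, 0, rfl⟩ ?_ ?_ ?_ ?_)
  · rintro _ ⟨k, rfl⟩
    exact h₁.mul_zpow cs h₂ k
  · rintro _ ⟨j, rfl⟩ _ ⟨k, rfl⟩
    refine ⟨-(-j + k) + j, ?_⟩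
    rw [← mul_assoc (t₁ * ρ ^ j), h₁.mul_zpow_mul cs h₂, ← zpow_add, ← mul_assoc, hcomm', mul_assoc,
      ← zpow_add]
  · rintro _ ⟨k, rfl⟩
    exact ⟨_, hρt k⟩
  · rintro _ ⟨k, rfl⟩
    have hz (k : ℤ) : cs.inversionParity (x * t₁) (t₁ * ρ ^ k) = 0 := by
      refine hzero _ _ (h₁.mul_zpow cs h₂ k) ?_
      rw [mul_assoc x, ← mul_assoc t₁ t₁, h₁.mul_self, one_mul]
      have := hmin k
      omega
    have hzρ : cs.inversionParity (x * t₁ * ρ) (t₁ * ρ ^ k) = 0 := by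
      refine hzero _ _ (h₁.mul_zpow cs h₂ k) ?_
      have e : x * t₁ * ρ = x * t₂ := by
        rw [hρ, mul_assoc, ← mul_assoc t₁ t₁, h₁.mul_self, one_mul]
      have e' : x * t₁ * ρ * (t₁ * ρ ^ k) = x * ρ ^ (k - 1) := by
        rw [mul_assoc, hρt, mul_assoc, ← mul_assoc t₁ t₁, h₁.mul_self, one_mul]
      rw [e', e]
      have := hmin (k - 1)
      omega
    have e : ρ * (t₁ * ρ ^ k) * ρ⁻¹ = t₁ * ρ ^ (k - 1 - 1) := by
      rw [hρt, mul_assoc, zpow_sub_one ρ (k - 1)]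
    rwa [inversionParity_mul, e, hz, add_zero] at hzρ

theorem exists_reflection_pair_lowering_peak {x t₁ t₂ : W} (h₁ : cs.IsReflection t₁)
    (h₂ : cs.IsReflection t₂) (hne : t₁ ≠ t₂) (hx₁ : cs.length x < cs.length (x * t₁))
    (hx₂ : cs.length (x * t₁ * t₂) < cs.length (x * t₁)) :
    ∃ r₁ r₂, cs.IsReflection r₁ ∧ cs.IsReflection r₂ ∧ r₁ * r₂ = t₁ * t₂ ∧
      Subgroup.closure {r₁, r₂} = Subgroup.closure {t₁, t₂} ∧
      cs.length (x * r₁) < cs.length (x * t₁) := by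
  obtain ⟨k, hk⟩ := cs.exists_length_mul_zpow_lt h₁ h₂ hne
    (by rwa [mul_assoc, h₁.mul_self, mul_one]) hx₂
  have hr₁ := h₁.mul_zpow cs h₂ k
  have hr₂ : cs.IsReflection (t₁ * (t₁ * t₂) ^ (k + 1)) := h₁.mul_zpow cs h₂ (k + 1)
  have hmul : t₁ * (t₁ * t₂) ^ k * (t₁ * (t₁ * t₂) ^ (k + 1)) = t₁ * t₂ := by
    rw [← mul_assoc, h₁.mul_zpow_mul cs h₂, ← zpow_add, neg_add_cancel_left, zpow_one]
  refine ⟨_, _, hr₁, hr₂, hmul, le_antisymm ?_ ?_, by rwa [← mul_assoc]⟩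
  · have m₁ : t₁ ∈ Subgroup.closure {t₁, t₂} := Subgroup.subset_closure (by simp)
    have m₂ : t₂ ∈ Subgroup.closure {t₁, t₂} := Subgroup.subset_closure (by simp)
    rw [Subgroup.closure_le]
    rintro _ (rfl | rfl)
    · exact mul_mem m₁ (zpow_mem (mul_mem m₁ m₂) _)
    · exact mul_mem m₁ (zpow_mem (mul_mem m₁ m₂) _)
  · set K := Subgroup.closure {t₁ * (t₁ * t₂) ^ k, t₁ * (t₁ * t₂) ^ (k + 1)} with hK
    have m₁ : t₁ * (t₁ * t₂) ^ k ∈ K := Subgroup.subset_closure (by simp)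
    have m₂ : t₁ * (t₁ * t₂) ^ (k + 1) ∈ K := Subgroup.subset_closure (by simp)
    have mρ : t₁ * t₂ ∈ K := hmul ▸ mul_mem m₁ m₂
    have mt₁ : t₁ ∈ K := (mul_mem_cancel_right (zpow_mem mρ k)).1 m₁
    rw [Subgroup.closure_le]
    rintro _ (rfl | rfl)
    · exact mt₁
    · exact (mul_mem_cancel_left mt₁).1 mρ

end Inversions

section Factorizations

variable {B : Type*} {W : Type*} [Group W] {M : CoxeterMatrix B} (cs : CoxeterSystem M W)

/-- The total length of the vertices, other than `x`, of the path `x, x t₁, x t₁ t₂, …`. -/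
noncomputable def pathLength (x : W) : List W → ℕ
  | [] => 0
  | t :: l => cs.length (x * t) + pathLength (x * t) l

/-- The length strictly increases along the path `x, x t₁, x t₁ t₂, …`. -/
def IsAscending (x : W) : List W → Prop
  | [] => True
  | t :: l => cs.length x < cs.length (x * t) ∧ IsAscending (x * t) l

theorem pathLength_append (x : W) (a b : List W) :
    cs.pathLength x (a ++ b) = cs.pathLength x a + cs.pathLength (x * a.prod) b := by
  induction a generalizing x with
  | nil => simp [pathLength]
  | cons t a ih => simp [pathLength, ih, mul_assoc, add_assoc]

theorem isAscending_append (x : W) (a b : List W) :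
    cs.IsAscending x (a ++ b) ↔ cs.IsAscending x a ∧ cs.IsAscending (x * a.prod) b := by
  induction a generalizing x with
  | nil => simp [IsAscending]
  | cons t a ih => simp [IsAscending, ih, mul_assoc, and_assoc]

theorem exists_peak_of_not_isAscending {x : W} {l : List W} (hl : ∀ t ∈ l, cs.IsReflection t)
    (hhead : ∀ t ∈ l.head?, cs.length x < cs.length (x * t)) (h : ¬ cs.IsAscending x l) :
    ∃ a t₁ t₂ b, l = a ++ t₁ :: t₂ :: b ∧
      cs.length (x * a.prod) < cs.length (x * a.prod * t₁) ∧
      cs.length (x * a.prod * t₁ * t₂) < cs.length (x * a.prod * t₁) := by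
  induction l generalizing x with
  | nil => exact absurd trivial h
  | cons t l ih =>
    have hx : cs.length x < cs.length (x * t) := hhead t (by simp)
    by_cases hnext : ∀ t' ∈ l.head?, cs.length (x * t) < cs.length (x * t * t')
    · obtain ⟨a, t₁, t₂, b, rfl, h₁, h₂⟩ :=
        ih (fun q hq ↦ hl q (by simp [hq])) hnext fun h' ↦ h ⟨hx, h'⟩
      exact ⟨t :: a, t₁, t₂, b, rfl, by simpa [mul_assoc] using h₁,
        by simpa [mul_assoc] using h₂⟩
    · push Not at hnext
      obtain ⟨t', ht', hle⟩ := hnext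
      obtain ⟨b, rfl⟩ : ∃ b, l = t' :: b := by
        cases l with
        | nil => simp at ht'
        | cons q b => exact ⟨b, by simp at ht'; rw [ht']⟩
      refine ⟨[], t, t', b, rfl, by simpa using hx, ?_⟩
      have := (hl t' (by simp)).length_mul_left_ne (x * t)
      simpa using lt_of_le_of_ne hle this

theorem closure_mem_append_cons_cons (a b : List W) (t₁ t₂ : W) :
    Subgroup.closure {t | t ∈ a ++ t₁ :: t₂ :: b} =
      Subgroup.closure {t | t ∈ a ++ b} ⊔ Subgroup.closure {t₁, t₂} := by
  rw [← Subgroup.closure_union]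
  congr 1
  ext t
  simp only [mem_append, mem_cons, Set.mem_ofPred_eq, Set.mem_union, Set.mem_insert_iff,
    Set.mem_singleton_iff]
  tauto

/-- A shortest factorization into reflections can be replaced by one whose partial products have
increasing length, without changing the subgroup generated by its factors. -/
theorem exists_isAscending_factorization {l : List W} (hl : ∀ t ∈ l, cs.IsReflection t)
    (hmin : ∀ l' : List W, (∀ t ∈ l', cs.IsReflection t) → l'.prod = l.prod →
      l.length ≤ l'.length) :
    ∃ l' : List W, cs.IsAscending 1 l' ∧ l'.prod = l.prod ∧ l'.length = l.length ∧
      (∀ t ∈ l', cs.IsReflection t) ∧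
      Subgroup.closure {t | t ∈ l'} = Subgroup.closure {t | t ∈ l} := by
  induction hN : cs.pathLength 1 l using Nat.strong_induction_on generalizing l with
  | _ N ih =>
  by_cases hasc : cs.IsAscending 1 l
  · exact ⟨l, hasc, rfl, rfl, hl, rfl⟩
  have hhead : ∀ t ∈ l.head?, cs.length 1 < cs.length (1 * t) := by
    intro t ht
    rw [length_one, one_mul]
    exact (hl t (mem_of_mem_head? ht)).odd_length.pos
  obtain ⟨a, t₁, t₂, b, rfl, h₁, h₂⟩ := cs.exists_peak_of_not_isAscending hl hhead hasc
  have ht₁ : cs.IsReflection t₁ := hl _ (by simp)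
  have ht₂ : cs.IsReflection t₂ := hl _ (by simp)
  have hne : t₁ ≠ t₂ := by
    rintro rfl
    have := hmin (a ++ b) (fun t ht ↦ hl t (by simp at ht ⊢; tauto))
      (by simp [← mul_assoc t₁ t₁, ht₁.mul_self])
    simp at this
  obtain ⟨r₁, r₂, hr₁, hr₂, hmul, hcl, hlt⟩ :=
    cs.exists_reflection_pair_lowering_peak ht₁ ht₂ hne h₁ h₂
  have hprod : (a ++ r₁ :: r₂ :: b).prod = (a ++ t₁ :: t₂ :: b).prod := by
    simp [← mul_assoc r₁ r₂, hmul, mul_assoc]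
  have hlen : (a ++ r₁ :: r₂ :: b).length = (a ++ t₁ :: t₂ :: b).length := by simp
  have hrefl : ∀ t ∈ a ++ r₁ :: r₂ :: b, cs.IsReflection t := by
    intro t ht
    simp only [mem_append, mem_cons] at ht
    rcases ht with ht | rfl | rfl | ht
    · exact hl t (by simp [ht])
    · exact hr₁
    · exact hr₂
    · exact hl t (by simp [ht])
  have hpath : cs.pathLength 1 (a ++ r₁ :: r₂ :: b) < N := by
    rw [← hN, pathLength_append, pathLength_append]
    simp only [pathLength]
    rw [mul_assoc _ r₁ r₂, hmul, ← mul_assoc]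
    omega
  obtain ⟨l', hasc', hprod', hlen', hl', hcl'⟩ :=
    ih _ hpath hrefl (by rwa [hprod, hlen]) rfl
  refine ⟨l', hasc', hprod'.trans hprod, hlen'.trans hlen, hl', hcl'.trans ?_⟩
  rw [closure_mem_append_cons_cons, closure_mem_append_cons_cons, hcl]

theorem closure_eq_of_isAscending {l : List W} {ω : List B}
    (hl : ∀ t ∈ l, cs.IsReflection t) (hasc : cs.IsAscending 1 l)
    (hprod : cs.wordProd ω = l.prod) (hlen : ω.length = l.length) :
    Subgroup.closure {t | t ∈ l} = Subgroup.closure {t | t ∈ ω.map cs.simple} := by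
  induction l using List.reverseRecOn generalizing ω with
  | nil => rw [eq_nil_of_length_eq_zero hlen, map_nil]
  | append_singleton l t ih =>
    have ht : cs.IsReflection t := hl t (by simp)
    rw [isAscending_append] at hasc
    have hω : cs.wordProd ω = l.prod * t := by simpa using hprod
    have hωt : cs.wordProd ω * t = l.prod := by rw [hω, mul_assoc, ht.mul_self, mul_one]
    have hlt : cs.length (cs.wordProd ω * t) < cs.length (cs.wordProd ω) := by
      rw [hωt, hω]
      simpa [IsAscending] using hasc.2
    obtain ⟨j, hj, htj⟩ := cs.exists_eq_getD_rightInvSeq ht hlt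
    have hih := ih (ω := ω.eraseIdx j) (fun q hq ↦ hl q (by simp [hq])) hasc.1
      (by rw [← wordProd_mul_getD_rightInvSeq, ← htj, hωt])
      (by rw [length_eraseIdx_of_lt hj, hlen]; simp)
    have hsplit : ω = ω.take j ++ ω[j] :: ω.drop (j + 1) := by
      rw [List.cons_getElem_drop_succ, List.take_append_drop]
    have hunion₁ : {q | q ∈ l ++ [t]} = {q | q ∈ l} ∪ {t} := by
      ext; simp [or_comm]
    have hunion₂ : {q | q ∈ ω.map cs.simple} =
        {q | q ∈ (ω.eraseIdx j).map cs.simple} ∪ {cs.simple ω[j]} := by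
      ext q
      rw [eraseIdx_eq_take_drop_succ]
      conv_lhs => rw [hsplit]
      simp only [map_append, map_cons, mem_append, mem_cons, Set.mem_ofPred_eq, Set.mem_union,
        Set.mem_singleton_iff]
      tauto
    set K := Subgroup.closure {q | q ∈ (ω.eraseIdx j).map cs.simple} with hK
    have hv : cs.wordProd (ω.drop (j + 1)) ∈ K := by
      refine list_prod_mem fun q hq ↦ Subgroup.subset_closure ?_
      simp only [eraseIdx_eq_take_drop_succ, map_append, mem_append, Set.mem_ofPred_eq]
      exact Or.inr hq
    rw [getD_rightInvSeq, getElem?_eq_getElem hj] at htj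
    simp only [Option.map_some, Option.getD_some] at htj
    set v := cs.wordProd (ω.drop (j + 1)) with hvdef
    rw [hunion₁, hunion₂, Subgroup.closure_union, Subgroup.closure_union, hih]
    refine le_antisymm (sup_le le_sup_left ?_) (sup_le le_sup_left ?_)
    · rw [Subgroup.closure_le, Set.singleton_subset_iff, htj]
      have hs : cs.simple ω[j] ∈ K ⊔ Subgroup.closure {cs.simple ω[j]} :=
        Subgroup.mem_sup_right (Subgroup.subset_closure rfl)
      have hv' := Subgroup.mem_sup_left (T := Subgroup.closure {cs.simple ω[j]}) hv
      exact mul_mem (mul_mem (inv_mem hv') hs) hv'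
    · rw [Subgroup.closure_le, Set.singleton_subset_iff]
      have e : cs.simple ω[j] = v * t * v⁻¹ := by rw [htj]; group
      rw [e]
      have hs : t ∈ K ⊔ Subgroup.closure {t} :=
        Subgroup.mem_sup_right (Subgroup.subset_closure rfl)
      have hv' := Subgroup.mem_sup_left (T := Subgroup.closure {t}) hv
      exact mul_mem (mul_mem hv' hs) (inv_mem hv')

theorem closure_eq_of_prod_eq_wordProd {l : List W} {ω : List B}
    (hl : ∀ t ∈ l, cs.IsReflection t) (hprod : l.prod = cs.wordProd ω)
    (hlen : l.length = ω.length) (hred : reflLength cs (cs.wordProd ω) = ω.length) :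
    Subgroup.closure {t | t ∈ l} = Subgroup.closure {t | t ∈ ω.map cs.simple} := by
  obtain ⟨l', hasc, hprod', hlen', hl', hcl⟩ := cs.exists_isAscending_factorization hl
    fun l' hl' hprod' ↦ by
      rw [hlen, ← hred]
      exact Nat.sInf_le ⟨l', hl', hprod'.trans hprod, rfl⟩
  rw [← hcl]
  exact cs.closure_eq_of_isAscending hl' hasc (hprod.symm.trans hprod'.symm)
    (hlen.symm.trans hlen'.symm)

end Factorizations

end CoxeterSystem

/-- Let `(W,T)` be a dual Coxeter system of finite rank `m` (witnessed
by a Coxeter system `cs` indexed by `Fin m` with reflection set `T`) and let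
`c = s₁ ⋯ sₙ` be a parabolic Coxeter element with `ℓ_T(c) = n`.  Then the subgroup
generated by the factors of a reduced reflection factorization of `c` does not depend on
the factorization: for any two length-`n` tuples of reflections with product `c`, the
subgroups generated by their entries coincide. -/
theorem closure_of_reduced_factorization_independent
    {W : Type*} [Group W] (T : Set W) (m n : ℕ) (hmn : n ≤ m)
    (M : CoxeterMatrix (Fin m)) (cs : CoxeterSystem M W)
    (hT : {t | cs.IsReflection t} = T)
    (c : W) (hc : c = (List.ofFn fun i : Fin n => cs.simple (Fin.castLE hmn i)).prod)
    (hlc : reflLength cs c = n)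
    (l l' : List W) (hlen : l.length = n) (hlen' : l'.length = n)
    (hmem : ∀ t ∈ l, t ∈ T) (hmem' : ∀ t ∈ l', t ∈ T)
    (hprod : l.prod = c) (hprod' : l'.prod = c) :
    Subgroup.closure {t | t ∈ l} = Subgroup.closure {t | t ∈ l'} := by
  subst hT
  have hω : cs.wordProd (List.ofFn (Fin.castLE hmn)) = c := by
    rw [hc, CoxeterSystem.wordProd, List.map_ofFn]
    rfl
  have hred : reflLength cs (cs.wordProd (List.ofFn (Fin.castLE hmn))) =
      (List.ofFn (Fin.castLE hmn)).length := by
    rw [hω, hlc, List.length_ofFn]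
  rw [cs.closure_eq_of_prod_eq_wordProd hmem (hprod.trans hω.symm) (by simpa using hlen) hred,
    cs.closure_eq_of_prod_eq_wordProd hmem' (hprod'.trans hω.symm) (by simpa using hlen') hred]
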